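/- Let M be a metric space, {X_m}_{m≥1} M-valued random elements, X an M-valued random element, and {N_n}_{n≥1} positive-integer-valued random variables, all on a common probability space. Suppose that for every n and m, N_n is independent of X_m. If N_n → ∞ in probability (P(N_n < K) → 0 for every fixed K) and X_m converges in distribution to X as m → ∞, then X_{N_n} converges in distribution to X as n → ∞. -/

import Mathlib

open Filter MeasureTheory ProbabilityTheory

/-!
Because `N` is independent of each `X i`, the law of `X_N` is the mixture of the laws of the `X i`
with weights `P (N = i)`. Hence `E f(X_N)` is the average of `i ↦ E f(X i)` against the law of `N`.
When `N` tends to infinity in probability, that law puts almost all of its mass where `E f(X i)` is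
close to its limit, and the remaining mass contributes little since `f` is bounded.
-/

open scoped Topology BoundedContinuousFunction

theorem integral_measure_comp {α E G : Type*} [MeasurableSpace α] [MeasurableSpace E]
    [NormedAddCommGroup G] [NormedSpace ℝ G] {μ : Measure α} {κ : Kernel α E} {f : E → G}
    (hf : Integrable f (κ ∘ₘ μ)) :
    ∫ x, f x ∂(κ ∘ₘ μ) = ∫ a, ∫ x, f x ∂κ a ∂μ := by
  rw [Measure.comp_eq_comp_const_apply] at hf ⊢
  rw [Kernel.integral_comp hf, Kernel.const_apply]

section ConcentratingMeasures

variable {α β G : Type*} [MeasurableSpace α] [NormedAddCommGroup G] [NormedSpace ℝ G]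
  [CompleteSpace G]

theorem norm_integral_sub_le_add_mul_measureReal_compl {μ : Measure α} [IsProbabilityMeasure μ]
    {g : α → G} {c : G} {s : Set α} {ε D : ℝ} (hg : Integrable g μ) (hs : MeasurableSet s)
    (hε : 0 ≤ ε) (hgs : ∀ x ∈ s, ‖g x - c‖ ≤ ε) (hgD : ∀ x, ‖g x - c‖ ≤ D) :
    ‖∫ x, g x ∂μ - c‖ ≤ ε + D * μ.real sᶜ := by
  have hgc : Integrable (fun x => g x - c) μ := hg.sub (integrable_const c)
  calc ‖∫ x, g x ∂μ - c‖
      = ‖∫ x in s, (g x - c) ∂μ + ∫ x in sᶜ, (g x - c) ∂μ‖ := by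
        rw [integral_add_compl hs hgc, integral_sub hg (integrable_const c), integral_const,
          probReal_univ, one_smul]
    _ ≤ ε * μ.real s + D * μ.real sᶜ := norm_add_le_of_le
        (norm_setIntegral_le_of_norm_le_const (measure_lt_top μ s) hgs)
        (norm_setIntegral_le_of_norm_le_const (measure_lt_top μ sᶜ) fun x _ => hgD x)
    _ ≤ ε + D * μ.real sᶜ := by grw [measureReal_le_one, mul_one]

variable {l : Filter β} {F : Filter α} {μ : β → Measure α} [∀ n, IsProbabilityMeasure (μ n)]

theorem tendsto_integral_of_tendsto_measure_compl
    (hμ : ∀ s ∈ F, Tendsto (fun n => μ n sᶜ) l (𝓝 0)) {g : α → G} (hg : StronglyMeasurable g)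
    {C : ℝ} (hgC : ∀ x, ‖g x‖ ≤ C) {c : G} (hgc : Tendsto g F (𝓝 c)) :
    Tendsto (fun n => ∫ x, g x ∂μ n) l (𝓝 c) := by
  refine Metric.tendsto_nhds.2 fun ε hε => ?_
  let s : Set α := {x | ‖g x - c‖ ≤ ε / 2}
  have hs : MeasurableSet s :=
    (hg.sub stronglyMeasurable_const).norm.measurable measurableSet_Iic
  have hsF : s ∈ F := by
    filter_upwards [hgc (Metric.closedBall_mem_nhds c (half_pos hε))] with x hx
    simpa [s, dist_eq_norm] using hx
  have htail : Tendsto (fun n => (C + ‖c‖) * (μ n).real sᶜ) l (𝓝 0) := by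
    simpa [Measure.real] using
      ((ENNReal.tendsto_toReal ENNReal.zero_ne_top).comp (hμ s hsF)).const_mul (C + ‖c‖)
  filter_upwards [htail.eventually_lt_const (half_pos hε)] with n hn
  have hint : Integrable g (μ n) := .of_bound hg.aestronglyMeasurable C (.of_forall hgC)
  have hbound : ‖∫ x, g x ∂μ n - c‖ ≤ ε / 2 + (C + ‖c‖) * (μ n).real sᶜ :=
    norm_integral_sub_le_add_mul_measureReal_compl hint hs (half_pos hε).le (fun x hx => hx)
      fun x => norm_sub_le_of_le (hgC x) le_rfl
  rw [dist_eq_norm]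
  linarith

theorem tendsto_integral_comp_of_tendsto_measure_compl {E : Type*} [MeasurableSpace E]
    {κ : Kernel α E} [IsMarkovKernel κ] (hμ : ∀ s ∈ F, Tendsto (fun n => μ n sᶜ) l (𝓝 0))
    {f : E → G} (hf : StronglyMeasurable f) {C : ℝ} (hfC : ∀ x, ‖f x‖ ≤ C) {c : G}
    (hκ : Tendsto (fun a => ∫ x, f x ∂κ a) F (𝓝 c)) :
    Tendsto (fun n => ∫ x, f x ∂(κ ∘ₘ μ n)) l (𝓝 c) := by
  have hmean_le : ∀ a, ‖∫ x, f x ∂κ a‖ ≤ C := fun a => by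
    simpa using norm_integral_le_of_norm_le_const (μ := κ a) (.of_forall hfC)
  have hmix : ∀ n, ∫ x, f x ∂(κ ∘ₘ μ n) = ∫ a, ∫ x, f x ∂κ a ∂μ n := fun n =>
    integral_measure_comp (.of_bound hf.aestronglyMeasurable C (.of_forall hfC))
  simp only [hmix]
  exact tendsto_integral_of_tendsto_measure_compl hμ hf.integral_kernel hmean_le hκ

end ConcentratingMeasures

theorem tsum_measure_fiber_inter {Ω ι : Type*} [MeasurableSpace Ω] [MeasurableSpace ι]
    [Countable ι] [MeasurableSingletonClass ι] {N : Ω → ι} (hN : Measurable N) (P : Measure Ω)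
    (A : Set Ω) : ∑' i, P (N ⁻¹' {i} ∩ A) = P A := by
  have hfiber : ∀ i, MeasurableSet (N ⁻¹' {i}) := fun i => hN (measurableSet_singleton i)
  have h := tsum_measure_preimage_singleton (μ := P.restrict A) Set.countable_univ
    fun i _ => hfiber i
  rw [tsum_univ fun i => P.restrict A (N ⁻¹' {i})] at h
  simpa only [Measure.restrict_apply (hfiber _), Set.preimage_univ, Measure.restrict_apply_univ]
    using h

section RandomIndex

variable {Ω ι E : Type*} [MeasurableSpace Ω] [MeasurableSpace ι] [MeasurableSpace E]
  [Countable ι] [MeasurableSingletonClass ι] {P : Measure Ω} {X : ι → Ω → E}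

theorem aemeasurable_randomIndex {N : Ω → ι} (hX : ∀ i, AEMeasurable (X i) P) (hN : Measurable N) :
    AEMeasurable (fun ω => X (N ω) ω) P := by
  have hmk : Measurable fun p : ι × Ω => (hX p.1).mk (X p.1) p.2 :=
    measurable_from_prod_countable_right fun i => (hX i).measurable_mk
  refine ⟨fun ω => (hX (N ω)).mk _ ω, hmk.comp (hN.prodMk measurable_id), ?_⟩
  filter_upwards [ae_all_iff.2 fun i => (hX i).ae_eq_mk] with ω hω using hω (N ω)

theorem map_randomIndex_eq_comp {N : Ω → ι} (hX : ∀ i, AEMeasurable (X i) P) (hN : Measurable N)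
    (hindep : ∀ i, IndepFun N (X i) P) :
    P.map (fun ω => X (N ω) ω) = Kernel.ofFunOfCountable (fun i => P.map (X i)) ∘ₘ P.map N := by
  ext s hs
  calc P.map (fun ω => X (N ω) ω) s
      = P ((fun ω => X (N ω) ω) ⁻¹' s) :=
        Measure.map_apply_of_aemeasurable (aemeasurable_randomIndex hX hN) hs
    _ = ∑' i, P (N ⁻¹' {i} ∩ (fun ω => X (N ω) ω) ⁻¹' s) :=
        (tsum_measure_fiber_inter hN P _).symm
    _ = ∑' i, P (N ⁻¹' {i} ∩ X i ⁻¹' s) := by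
        congr! 3 with i
        ext ω
        simp +contextual
    _ = ∑' i, P.map (X i) s * P.map N {i} := by
        congr! 2 with i
        rw [(hindep i).measure_inter_preimage_eq_mul _ _ (measurableSet_singleton i) hs,
          Measure.map_apply_of_aemeasurable (hX i) hs,
          Measure.map_apply hN (measurableSet_singleton i), mul_comm]
    _ = (Kernel.ofFunOfCountable (fun i => P.map (X i)) ∘ₘ P.map N) s := by
        rw [Measure.bind_apply hs (Kernel.aemeasurable _), lintegral_countable']
        rfl

theorem tendsto_integral_randomIndex {α G : Type*} [NormedAddCommGroup G] [NormedSpace ℝ G]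
    [CompleteSpace G] [IsProbabilityMeasure P] {F : Filter ι} {l : Filter α} {N : α → Ω → ι}
    (hX : ∀ i, AEMeasurable (X i) P) (hN : ∀ n, Measurable (N n))
    (hindep : ∀ n i, IndepFun (N n) (X i) P)
    (hNF : ∀ s ∈ F, Tendsto (fun n => P {ω | N n ω ∉ s}) l (𝓝 0))
    {f : E → G} (hf : StronglyMeasurable f) {C : ℝ} (hfC : ∀ x, ‖f x‖ ≤ C) {c : G}
    (hXc : Tendsto (fun i => ∫ ω, f (X i ω) ∂P) F (𝓝 c)) :
    Tendsto (fun n => ∫ ω, f (X (N n ω) ω) ∂P) l (𝓝 c) := by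
  let κ : Kernel ι E := Kernel.ofFunOfCountable fun i => P.map (X i)
  have : IsMarkovKernel κ := ⟨fun i => Measure.isProbabilityMeasure_map (hX i)⟩
  have : ∀ n, IsProbabilityMeasure (P.map (N n)) := fun n =>
    Measure.isProbabilityMeasure_map (hN n).aemeasurable
  have hmap_compl : ∀ s ∈ F, Tendsto (fun n => P.map (N n) sᶜ) l (𝓝 0) := fun s hs => by
    simpa only [Measure.map_apply (hN _) s.to_countable.measurableSet.compl] using! hNF s hs
  have hκ : ∀ i, ∫ x, f x ∂κ i = ∫ ω, f (X i ω) ∂P := fun i =>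
    integral_map (hX i) hf.aestronglyMeasurable
  have hκN : ∀ n, ∫ x, f x ∂(κ ∘ₘ P.map (N n)) = ∫ ω, f (X (N n ω) ω) ∂P := fun n => by
    rw [← map_randomIndex_eq_comp hX (hN n) (hindep n),
      integral_map (aemeasurable_randomIndex hX (hN n)) hf.aestronglyMeasurable]
  simp only [← hκ] at hXc
  simp only [← hκN]
  exact tendsto_integral_comp_of_tendsto_measure_compl hmap_compl hf hfC hXc

end RandomIndex

theorem tendsto_measure_notMem_of_forall_tendsto_measure_lt {Ω ι α : Type*} [MeasurableSpace Ω]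
    [LinearOrder ι] [Nonempty ι] {P : Measure Ω} {l : Filter α} {N : α → Ω → ι}
    (hN : ∀ K, Tendsto (fun n => P {ω | N n ω < K}) l (𝓝 0)) {s : Set ι} (hs : s ∈ atTop) :
    Tendsto (fun n => P {ω | N n ω ∉ s}) l (𝓝 0) := by
  obtain ⟨K, hK⟩ := mem_atTop_sets.1 hs
  refine tendsto_of_tendsto_of_tendsto_of_le_of_le tendsto_const_nhds (hN K)
    (fun _ => zero_le) fun n => measure_mono fun ω hω => ?_
  exact lt_of_not_ge fun hle => hω (hK _ hle)

section TendstoInDistribution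

variable {α Ω' E : Type*} {Ω : α → Type*} [∀ a, MeasurableSpace (Ω a)] [MeasurableSpace Ω']
  [TopologicalSpace E] [MeasurableSpace E] [OpensMeasurableSpace E] {l : Filter α}
  {μ : ∀ a, Measure (Ω a)} [∀ a, IsProbabilityMeasure (μ a)] {μ' : Measure Ω'}
  [IsProbabilityMeasure μ'] {X : ∀ a, Ω a → E} {Z : Ω' → E}

theorem tendstoInDistribution_iff_forall_integral_tendsto (hX : ∀ a, AEMeasurable (X a) (μ a))
    (hZ : AEMeasurable Z μ') :
    TendstoInDistribution X l Z μ μ' ↔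
      ∀ f : E →ᵇ ℝ, Tendsto (fun a => ∫ ω, f (X a ω) ∂μ a) l (𝓝 (∫ ω, f (Z ω) ∂μ')) := by
  have hmapX (f : E →ᵇ ℝ) (a : α) : ∫ x, f x ∂(μ a).map (X a) = ∫ ω, f (X a ω) ∂μ a :=
    integral_map (hX a) f.continuous.aestronglyMeasurable
  have hmapZ (f : E →ᵇ ℝ) : ∫ x, f x ∂μ'.map Z = ∫ ω, f (Z ω) ∂μ' :=
    integral_map hZ f.continuous.aestronglyMeasurable
  simp only [← hmapX, ← hmapZ]
  exact ⟨fun h => ProbabilityMeasure.tendsto_iff_forall_integral_tendsto.1 h.tendsto,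
    fun h => ⟨hX, hZ, ProbabilityMeasure.tendsto_iff_forall_integral_tendsto.2 h⟩⟩

theorem tendsto_integral_of_tendstoInDistribution (h : TendstoInDistribution X l Z μ μ')
    (f : E →ᵇ ℝ) : Tendsto (fun a => ∫ ω, f (X a ω) ∂μ a) l (𝓝 (∫ ω, f (Z ω) ∂μ')) :=
  (tendstoInDistribution_iff_forall_integral_tendsto
    h.forall_aemeasurable h.aemeasurable_limit).1 h f

end TendstoInDistribution

theorem thm_random_index_in_distribution_convergence_general
    {Ω Ω' ι α M : Type*} [MeasurableSpace Ω] [MeasurableSpace Ω']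
    [Countable ι] [MeasurableSpace ι] [MeasurableSingletonClass ι]
    [TopologicalSpace M] [MeasurableSpace M] [OpensMeasurableSpace M]
    {P : Measure Ω} [IsProbabilityMeasure P] {P' : Measure Ω'} [IsProbabilityMeasure P']
    {F : Filter ι} {l : Filter α} {X : ι → Ω → M} {Xlim : Ω' → M} {N : α → Ω → ι}
    (hN : ∀ n, Measurable (N n)) (hindep : ∀ n i, IndepFun (N n) (X i) P)
    (hNF : ∀ s ∈ F, Tendsto (fun n => P {ω | N n ω ∉ s}) l (𝓝 0))
    (hXconv : TendstoInDistribution X F Xlim (fun _ => P) P') :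
    TendstoInDistribution (fun n ω => X (N n ω) ω) l Xlim (fun _ => P) P' := by
  have hX := hXconv.forall_aemeasurable
  have hXN := fun n => aemeasurable_randomIndex hX (hN n)
  refine (tendstoInDistribution_iff_forall_integral_tendsto hXN hXconv.aemeasurable_limit).2
    fun f => ?_
  exact tendsto_integral_randomIndex hX hN hindep hNF f.continuous.stronglyMeasurable
    f.norm_coe_le_norm (tendsto_integral_of_tendstoInDistribution hXconv f)

theorem thm_random_index_in_distribution_convergence
    {Ω M : Type*} [MeasurableSpace Ω] [MetricSpace M]
    [MeasurableSpace M] [BorelSpace M]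
    (P : Measure Ω) [IsProbabilityMeasure P]
    (X : ℕ → Ω → M) (Xlim : Ω → M) (N : ℕ → Ω → ℕ)
    (hX : ∀ m, Measurable (X m)) (hXlim : Measurable Xlim)
    (hN : ∀ n, Measurable (N n)) (hNpos : ∀ n ω, 0 < N n ω)
    (hindep : ∀ n m : ℕ, IndepFun (N n) (X m) P)
    (hNinf : ∀ K : ℕ, Tendsto (fun n => P {ω | N n ω < K}) atTop (nhds 0))
    (hXconv : ∀ f : BoundedContinuousFunction M ℝ,
      Tendsto (fun m => ∫ ω, f (X m ω) ∂P) atTop (nhds (∫ ω, f (Xlim ω) ∂P))) :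
    ∀ f : BoundedContinuousFunction M ℝ,
      Tendsto (fun n => ∫ ω, f (X (N n ω) ω) ∂P) atTop (nhds (∫ ω, f (Xlim ω) ∂P)) := by
  have hXdist : TendstoInDistribution X atTop Xlim (fun _ => P) P :=
    (tendstoInDistribution_iff_forall_integral_tendsto (fun m => (hX m).aemeasurable)
      hXlim.aemeasurable).2 hXconv
  exact tendsto_integral_of_tendstoInDistribution <|
    thm_random_index_in_distribution_convergence_general hN hindep
      (fun _ => tendsto_measure_notMem_of_forall_tendsto_measure_lt hNinf) hXdist
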